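/- arXiv:math/0608037 — 2 statements merged into one kernel-verified Lean document; each statement's English description precedes it below -/
import Mathlib

section
/- (Maximum principle under Neumann boundary conditions for parabolic systems.) Assume the setting below, together with Requirement 1 and Requirement 2. If the boundary condition D_x f(t,x)[ν(x)] = 0 holds for all (t,x) ∈ (0,T) × ∂M, where D_x f(t,x)[ν(x)] denotes the spatial derivative (taken within M) of the map y ↦ f(t,y) at x applied to ν(x), then f(t,x) lies in W for all (t,x) ∈ [0,T] × M. -/
open scoped RealInnerProductSpace

/-- `lam` is a supporting vector for `W` at `ω`: it is a unit vector with
`⟪lam, σ⟫ ≤ ⟪lam, ω⟫` for all `σ ∈ W`. -/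
def IsSupportingVector {m : ℕ} (W : Set (EuclideanSpace ℝ (Fin m)))
    (ω lam : EuclideanSpace ℝ (Fin m)) : Prop :=
  ‖lam‖ = 1 ∧ ∀ σ ∈ W, ⟪lam, σ⟫ ≤ ⟪lam, ω⟫

/-! The distance `u = infDist (f t x) W` is shown to vanish by Hamilton's form of the scalar
maximum principle. At a spatial maximum of `u (t, ·)` with positive value, let `ω` be the point of
`W` nearest to `f t x` and `l` the unit vector pointing from `ω` to `f t x`. The function
`⟪l, f - ω⟫` lies below `u` and touches it at `(t, x)`, so it is also maximal in space at `x`: the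
Neumann condition kills its gradient and makes its Hessian nonpositive, even when `x` is a boundary
point. What remains of the equation is the reaction term, and `⟪l, φ (f t x)⟫ ≤ C * u` because
`⟪l, φ ω⟫ ≤ 0` and `φ` is `C`-Lipschitz. Hence `u` grows at most exponentially from `0`.
-/

open Set Filter Topology Metric
open scoped NNReal

theorem second_deriv_nonpos_of_isLocalMaxOn_Ioi {k k' : ℝ → ℝ} {k'' a : ℝ}
    (hmax : IsLocalMaxOn k (Ioi a) a) (hcont : ContinuousWithinAt k (Ioi a) a)
    (hk : ∀ᶠ u in 𝓝[>] a, HasDerivAt k (k' u) u) (hk' : HasDerivWithinAt k' k'' (Ioi a) a)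
    (hcrit : k' a = 0) : k'' ≤ 0 := by
  by_contra! hpos
  have hslope : ∀ᶠ u in 𝓝[>] a, 0 < slope k' a u :=
    ((hasDerivWithinAt_iff_tendsto_slope' self_notMem_Ioi).1 hk').eventually (lt_mem_nhds hpos)
  have hderiv_pos : ∀ᶠ u in 𝓝[>] a, 0 < k' u := by
    filter_upwards [hslope, self_mem_nhdsWithin] with u hu hau
    rw [slope_def_field, hcrit, sub_zero] at hu
    exact (div_pos_iff_of_pos_right (sub_pos.2 hau)).1 hu
  obtain ⟨b, hab, hb⟩ :=
    mem_nhdsGT_iff_exists_Ioc_subset.1 (inter_mem (inter_mem hk hderiv_pos) hmax)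
  have hcontIcc : ContinuousOn k (Icc a b) := by
    intro u hu
    rcases hu.1.eq_or_lt with rfl | hau
    · exact (continuousWithinAt_Ioi_iff_Ici.1 hcont).mono Icc_subset_Ici_self
    · exact (hb ⟨hau, hu.2⟩).1.1.continuousAt.continuousWithinAt
  have hint : interior (Icc a b) ⊆ Ioc a b := interior_Icc.trans_subset Ioo_subset_Ioc_self
  have hmono : StrictMonoOn k (Icc a b) :=
    strictMonoOn_of_hasDerivWithinAt_pos (convex_Icc a b) hcontIcc
      (fun u hu => (hb (hint hu)).1.1.hasDerivWithinAt) (fun u hu => (hb (hint hu)).1.2)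
  exact (hmono (left_mem_Icc.2 hab.le) (right_mem_Icc.2 hab.le) hab).not_ge (hb ⟨hab, le_rfl⟩).2

section FeasibleDirection

variable {E : Type*} [NormedAddCommGroup E] [NormedSpace ℝ E] {M : Set E} {x e : E}

/-- `e` is a feasible direction of `M` at `x`: the ray issuing from `x` along `e` initially runs in
`M`. The base point itself is not required to lie in `M`. -/
def IsFeasibleDirection (M : Set E) (x e : E) : Prop :=
  ∀ᶠ u : ℝ in 𝓝[>] 0, x + u • e ∈ M

theorem isFeasibleDirection_of_mem_interior (hx : x ∈ interior M) (e : E) :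
    IsFeasibleDirection M x e := by
  have hray : ContinuousAt (fun u : ℝ => x + u • e) 0 := by fun_prop
  refine nhdsWithin_le_nhds (hray.eventually_mem ?_)
  simpa using mem_interior_iff_mem_nhds.1 hx

namespace IsFeasibleDirection

theorem tendsto (he : IsFeasibleDirection M x e) :
    Tendsto (fun u : ℝ => x + u • e) (𝓝[>] 0) (𝓝[M] x) := by
  refine tendsto_nhdsWithin_iff.2 ⟨?_, he⟩
  have hray : Continuous (fun u : ℝ => x + u • e) := by fun_prop
  simpa using (hray.tendsto 0).mono_left nhdsWithin_le_nhds

theorem fderiv_nonpos (he : IsFeasibleDirection M x e) {g : E → ℝ} {g' : E →L[ℝ] ℝ}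
    (hmax : IsLocalMaxOn g M x) (hg : HasFDerivWithinAt g g' M x) : g' e ≤ 0 :=
  hmax.hasFDerivWithinAt_nonpos hg (mem_posTangentConeAt_of_frequently_mem he.frequently)

theorem second_fderiv_nonpos (he : IsFeasibleDirection M x e) {g : E → ℝ} {g' : E → E →L[ℝ] ℝ}
    {g'' : E →L[ℝ] E →L[ℝ] ℝ} (hx : x ∈ M) (hmax : IsLocalMaxOn g M x)
    (hg : ∀ y ∈ M, HasFDerivWithinAt g (g' y) M y) (hg' : HasFDerivWithinAt g' g'' M x)
    (hcrit : g' x e = 0) : g'' e e ≤ 0 := by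
  let ray : ℝ → E := fun u => x + u • e
  have hray_zero : ray 0 = x := by simp [ray]
  have hray (u : ℝ) : HasDerivWithinAt ray e (ray ⁻¹' M) u :=
    ((((hasDerivAt_id u).smul_const e).const_add x).congr_deriv (one_smul ℝ e)).hasDerivWithinAt
  have hderiv : ∀ᶠ u in 𝓝[>] (0 : ℝ), HasDerivAt (g ∘ ray) (g' (ray u) e) u := by
    obtain ⟨ε, hε, hsub⟩ := mem_nhdsGT_iff_exists_Ioo_subset.1 he
    filter_upwards [Ioo_mem_nhdsGT hε] with u hu
    exact ((hg _ (hsub hu)).comp_hasDerivWithinAt u (hray u) (mapsTo_preimage ray M)).hasDerivAt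
      (mem_of_superset (Ioo_mem_nhds hu.1 hu.2) hsub)
  have hderiv' : HasDerivWithinAt (fun u => g' (ray u) e) (g'' e e) (Ioi 0) 0 := by
    have hcomp : HasDerivWithinAt (g' ∘ ray) (g'' e) (ray ⁻¹' M) 0 :=
      (hray_zero ▸ hg').comp_hasDerivWithinAt 0 (hray 0) (mapsTo_preimage ray M)
    simpa using (hcomp.clm_apply (hasDerivWithinAt_const 0 _ e)).mono_of_mem_nhdsWithin he
  refine second_deriv_nonpos_of_isLocalMaxOn_Ioi (k := g ∘ ray) ?_ ?_ hderiv hderiv' ?_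
  · simpa only [IsLocalMaxOn, IsMaxFilter, Function.comp, hray_zero] using
      he.tendsto.eventually hmax
  · simpa only [ContinuousWithinAt, Function.comp, hray_zero] using
      (hg x hx).continuousWithinAt.tendsto.comp he.tendsto
  · rwa [hray_zero]

end IsFeasibleDirection

end FeasibleDirection

section OutwardNormal

variable {E : Type*} [NormedAddCommGroup E] [InnerProductSpace ℝ E] {M : Set E} {x ν : E}

/-- `ν` is an outward normal of `M` at `x`: a nonzero vector, not necessarily of unit length, such
that every direction in the open half-space opposite to `ν` is feasible. Directions tangent to the
boundary need not be feasible. -/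
structure IsOutwardNormal (M : Set E) (x ν : E) : Prop where
  ne_zero : ν ≠ 0
  isFeasibleDirection : ∀ e : E, ⟪e, ν⟫ < 0 → IsFeasibleDirection M x e

theorem isOutwardNormal_of_norm_eq_one (hν : ‖ν‖ = 1)
    (hseg : ∀ e : E, ⟪e, ν⟫ < 0 → ∃ ε > (0 : ℝ), ∀ u ∈ Icc (0 : ℝ) ε, x + u • e ∈ M) :
    IsOutwardNormal M x ν := by
  refine ⟨ne_zero_of_norm_ne_zero (by simp [hν]), fun e he => ?_⟩
  obtain ⟨ε, hε, hM⟩ := hseg e he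
  exact mem_of_superset (Icc_mem_nhdsGT hε) hM

namespace IsOutwardNormal

theorem fderiv_eq_zero (hν : IsOutwardNormal M x ν) {g : E → ℝ} {g' : E →L[ℝ] ℝ}
    (hmax : IsLocalMaxOn g M x) (hg : HasFDerivWithinAt g g' M x) (hbd : g' ν = 0) : g' = 0 := by
  have hνν : 0 < ⟪ν, ν⟫ := real_inner_self_pos.2 hν.ne_zero
  have hnonpos (e : E) : g' e ≤ 0 := by
    -- Subtracting a multiple of `ν` makes `e` feasible without changing `g' e`.
    let s : ℝ := (⟪e, ν⟫ + 1) / ⟪ν, ν⟫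
    have hinward : ⟪e - s • ν, ν⟫ < 0 := by
      rw [inner_sub_left, real_inner_smul_left, div_mul_cancel₀ _ hνν.ne']
      linarith
    simpa [hbd] using (hν.isFeasibleDirection _ hinward).fderiv_nonpos hmax hg
  ext e
  exact le_antisymm (hnonpos e) (by simpa using hnonpos (-e))

theorem apply_self_nonpos_of_feasible (hν : IsOutwardNormal M x ν) {B : E →L[ℝ] E →L[ℝ] ℝ}
    (hB : ∀ e, IsFeasibleDirection M x e → B e e ≤ 0) (e : E) : B e e ≤ 0 := by
  wlog he : ⟪e, ν⟫ ≤ 0 generalizing e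
  · simpa using this (-e) (by simpa using (not_le.1 he).le)
  have hνν : 0 < ⟪ν, ν⟫ := real_inner_self_pos.2 hν.ne_zero
  have hlim : Tendsto (fun s : ℝ => B (e - s • ν) (e - s • ν)) (𝓝[>] 0) (𝓝 (B e e)) := by
    have hcont : Continuous (fun s : ℝ => B (e - s • ν) (e - s • ν)) := by fun_prop
    simpa using (hcont.tendsto 0).mono_left nhdsWithin_le_nhds
  refine le_of_tendsto hlim ?_
  filter_upwards [self_mem_nhdsWithin] with s (hs : 0 < s)
  refine hB _ (hν.isFeasibleDirection _ ?_)
  rw [inner_sub_left, real_inner_smul_left]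
  linarith [mul_pos hs hνν]

end IsOutwardNormal

theorem fderiv_eq_zero_and_second_fderiv_nonpos_of_neumann {g : E → ℝ} {g' : E → E →L[ℝ] ℝ}
    {g'' : E →L[ℝ] E →L[ℝ] ℝ} (hx : x ∈ M) (hmax : IsLocalMaxOn g M x)
    (hg : ∀ y ∈ M, HasFDerivWithinAt g (g' y) M y) (hg' : HasFDerivWithinAt g' g'' M x)
    (hν : x ∈ frontier M → IsOutwardNormal M x ν) (hbd : x ∈ frontier M → g' x ν = 0) :
    g' x = 0 ∧ ∀ e, g'' e e ≤ 0 := by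
  have hsecond (hcrit : g' x = 0) (e : E) (he : IsFeasibleDirection M x e) : g'' e e ≤ 0 :=
    he.second_fderiv_nonpos hx hmax hg hg' (by simp [hcrit])
  by_cases hfr : x ∈ frontier M
  · have hcrit := (hν hfr).fderiv_eq_zero hmax (hg x hx) (hbd hfr)
    exact ⟨hcrit, (hν hfr).apply_self_nonpos_of_feasible (hsecond hcrit)⟩
  · have hint : x ∈ interior M := self_sdiff_frontier M ▸ ⟨hx, hfr⟩
    have hM : M ∈ 𝓝 x := mem_interior_iff_mem_nhds.1 hint
    have hcrit := (hmax.isLocalMax hM).hasFDerivAt_eq_zero ((hg x hx).hasFDerivAt hM)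
    exact ⟨hcrit, fun e => hsecond hcrit e (isFeasibleDirection_of_mem_interior hint e)⟩

variable {F : Type*} [NormedAddCommGroup F] [InnerProductSpace ℝ F]

theorem inner_elliptic_nonpos_of_neumann {ι : Type*} [Fintype ι] {f : E → F} {Df : E → E →L[ℝ] F}
    {D2f : E →L[ℝ] E →L[ℝ] F} {l : F} (hx : x ∈ M) (hmax : IsLocalMaxOn (fun y => ⟪l, f y⟫) M x)
    (hf : ∀ y ∈ M, HasFDerivWithinAt f (Df y) M y) (hDf : HasFDerivWithinAt Df D2f M x)
    (hν : x ∈ frontier M → IsOutwardNormal M x ν) (hbd : x ∈ frontier M → Df x ν = 0)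
    (X : ι → E) (b : E) : ⟪l, (∑ j, D2f (X j) (X j)) + Df x b⟫ ≤ 0 := by
  obtain ⟨hgrad, hhess⟩ := fderiv_eq_zero_and_second_fderiv_nonpos_of_neumann hx hmax
    (fun y hy => (innerSL ℝ l).hasFDerivAt.comp_hasFDerivWithinAt y (hf y hy))
    ((ContinuousLinearMap.compL ℝ E F ℝ (innerSL ℝ l)).hasFDerivAt.comp_hasFDerivWithinAt x hDf)
    hν (fun hfr => by simp [hbd hfr])
  have hdrift : ⟪l, Df x b⟫ = 0 := by simpa using congr($hgrad b)
  rw [inner_add_right, inner_sum, hdrift, add_zero]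
  exact Finset.sum_nonpos fun j _ => by simpa using hhess (X j)

end OutwardNormal

theorem dist_le_two_mul_dist_of_dist_eq_infDist {α : Type*} [PseudoMetricSpace α] {s : Set α}
    {x y z : α} (hy : y ∈ s) (hz : dist x z = infDist x s) : dist z y ≤ 2 * dist x y := by
  have hle : dist z x ≤ dist x y := by
    rw [dist_comm, hz]
    exact infDist_le_dist_of_mem hy
  linarith [dist_triangle z x y]

section SupportingFunctional

variable {F : Type*} [NormedAddCommGroup F] [InnerProductSpace ℝ F] {W : Set F} {ω l : F}

theorem mem_frontier_of_isMaxOn_inner (hω : ω ∈ W) (hl : l ≠ 0)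
    (hmax : IsMaxOn (fun σ => ⟪l, σ⟫) W ω) : ω ∈ frontier W := by
  by_contra hfr
  have hint : ω ∈ interior W := self_sdiff_frontier W ▸ ⟨hω, hfr⟩
  have hzero : innerSL ℝ l = 0 :=
    (hmax.isLocalMax (mem_interior_iff_mem_nhds.1 hint)).hasFDerivAt_eq_zero
      (innerSL ℝ l).hasFDerivAt
  exact hl (inner_self_eq_zero.1 congr($hzero l))

theorem inner_sub_le_infDist (hWne : W.Nonempty) (hl : ‖l‖ = 1)
    (hmax : IsMaxOn (fun σ => ⟪l, σ⟫) W ω) (q : F) : ⟪l, q - ω⟫ ≤ infDist q W := by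
  refine (le_infDist hWne).2 fun σ hσ => ?_
  have hσω : ⟪l, σ⟫ ≤ ⟪l, ω⟫ := hmax hσ
  calc ⟪l, q - ω⟫ ≤ ⟪l, q - σ⟫ := by
        rw [inner_sub_right, inner_sub_right]
        linarith
    _ ≤ ‖l‖ * ‖q - σ‖ := real_inner_le_norm _ _
    _ = dist q σ := by rw [hl, one_mul, dist_eq_norm]

theorem exists_frontier_isMaxOn_inner_of_infDist_pos (hWne : W.Nonempty) (hWc : IsComplete W)
    (hWconv : Convex ℝ W) {p : F} (hp : 0 < infDist p W) :
    ∃ ω ∈ frontier W, ∃ l : F, ‖l‖ = 1 ∧ IsMaxOn (fun σ => ⟪l, σ⟫) W ω ∧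
      dist p ω = infDist p W ∧ ⟪l, p - ω⟫ = infDist p W := by
  obtain ⟨ω, hω, hmin⟩ := exists_norm_eq_iInf_of_complete_convex hWne hWc hWconv p
  have hobtuse := (norm_eq_iInf_iff_real_inner_le_zero hWconv hω).1 hmin
  have hdist : dist p ω = infDist p W := by simp only [infDist_eq_iInf, dist_eq_norm, hmin]
  have hne : ‖p - ω‖ ≠ 0 := (dist_eq_norm p ω ▸ hdist ▸ hp).ne'
  let l : F := ‖p - ω‖⁻¹ • (p - ω)
  have hl : ‖l‖ = 1 := by rw [norm_smul, norm_inv, norm_norm, inv_mul_cancel₀ hne]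
  have hmax : IsMaxOn (fun σ => ⟪l, σ⟫) W ω := fun σ hσ => by
    have hle : ⟪l, σ - ω⟫ ≤ 0 := by
      rw [real_inner_smul_left]
      exact mul_nonpos_of_nonneg_of_nonpos (inv_nonneg.2 (norm_nonneg _)) (hobtuse σ hσ)
    rwa [inner_sub_right, sub_nonpos] at hle
  refine ⟨ω, mem_frontier_of_isMaxOn_inner hω (ne_zero_of_norm_ne_zero (by simp [hl])) hmax,
    l, hl, hmax, hdist, ?_⟩
  rw [real_inner_smul_left, real_inner_self_eq_norm_mul_norm, inv_mul_cancel_left₀ hne,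
    ← dist_eq_norm, hdist]

theorem inner_le_mul_norm_sub_of_lipschitzOnWith {Φ : F → F} {U : Set F} {C : ℝ≥0} {p : F}
    (hΦ : LipschitzOnWith C Φ U) (hp : p ∈ U) (hω : ω ∈ U) (hl : ‖l‖ = 1) (hle : ⟪l, Φ ω⟫ ≤ 0) :
    ⟪l, Φ p⟫ ≤ C * ‖p - ω‖ :=
  calc ⟪l, Φ p⟫ ≤ ⟪l, Φ p - Φ ω⟫ := by
        rw [inner_sub_right]
        linarith
    _ ≤ ‖l‖ * ‖Φ p - Φ ω‖ := real_inner_le_norm _ _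
    _ ≤ C * ‖p - ω‖ := by
        rw [hl, one_mul]
        exact hΦ.norm_sub_le hp hω

end SupportingFunctional

theorem deriv_nonneg_of_isLocalMaxOn_Iic {g : ℝ → ℝ} {g' a : ℝ}
    (hmax : IsLocalMaxOn g (Iic a) a) (hg : HasDerivWithinAt g g' (Iic a) a) : 0 ≤ g' := by
  have hcone : (a - 1) - a ∈ posTangentConeAt (Iic a) a :=
    sub_mem_posTangentConeAt_of_segment_subset
      ((convex_Iic a).segment_subset self_mem_Iic (sub_le_self a zero_le_one))
  simpa using hmax.hasFDerivWithinAt_nonpos hg.hasFDerivWithinAt hcone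

section HamiltonPrinciple

/-- `D` is the left derivative at `t` of some function that touches `v` from below at `t`, on a left
neighbourhood of `t`. It replaces the derivative of a `v` that need not be differentiable, such as a
distance function along a curve. -/
def HasLeftLowerSupport (v : ℝ → ℝ) (D t : ℝ) : Prop :=
  ∃ g : ℝ → ℝ, HasDerivWithinAt g D (Iic t) t ∧ g t = v t ∧ g ≤ᶠ[𝓝[≤] t] v

variable {X : Type*} [TopologicalSpace X] {M : Set X} {u : ℝ → X → ℝ} {T C : ℝ}

theorem nonpos_of_hasLeftLowerSupport_Ioc (hM : IsCompact M)
    (hu : ContinuousOn (fun p : ℝ × X => u p.1 p.2) (Icc 0 T ×ˢ M)) (h0 : ∀ x ∈ M, u 0 x ≤ 0)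
    (hsupp : ∀ t ∈ Ioc 0 T, ∀ x ∈ M, IsMaxOn (u t) M x → 0 < u t x →
      ∃ D ≤ C * u t x, HasLeftLowerSupport (fun s => u s x) D t) :
    ∀ t ∈ Icc 0 T, ∀ x ∈ M, u t x ≤ 0 := by
  by_contra! ⟨t₁, ht₁, x₁, hx₁, hpos⟩
  -- The damping rate `C + 1` beats the growth rate `C` at a maximum of the damped function.
  let w : ℝ → ℝ := fun t => Real.exp (-(C + 1) * t)
  have hw (t : ℝ) : 0 < w t := Real.exp_pos _
  obtain ⟨⟨t, x⟩, ⟨ht, hx⟩, hmax⟩ := (isCompact_Icc.prod hM).exists_isMaxOn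
    ⟨(t₁, x₁), ht₁, hx₁⟩ (f := fun p => w p.1 * u p.1 p.2) (.mul (by fun_prop) hu)
  have hmax' : ∀ s ∈ Icc 0 T, ∀ y ∈ M, w s * u s y ≤ w t * u t x :=
    fun s hs y hy => hmax (mk_mem_prod hs hy)
  have hut : 0 < u t x :=
    pos_of_mul_pos_right ((mul_pos (hw t₁) hpos).trans_le (hmax' t₁ ht₁ x₁ hx₁)) (hw t).le
  have ht0 : 0 < t := ht.1.lt_of_ne (by rintro rfl; exact (h0 x hx).not_gt hut)
  have hspace : IsMaxOn (u t) M x := fun y hy => le_of_mul_le_mul_left (hmax' t ht y hy) (hw t)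
  obtain ⟨D, hD, g, hg, hgt, hgu⟩ := hsupp t ⟨ht0, ht.2⟩ x hx hspace hut
  have htime : IsLocalMaxOn (fun s => w s * g s) (Iic t) t := by
    filter_upwards [hgu, Icc_mem_nhdsLE ht0] with s hgs hs
    calc w s * g s ≤ w s * u s x := mul_le_mul_of_nonneg_left hgs (hw s).le
      _ ≤ w t * u t x := hmax' s ⟨hs.1, hs.2.trans ht.2⟩ x hx
      _ = w t * g t := by rw [hgt]
  have hw' : HasDerivAt w (w t * -(C + 1)) t := by
    simpa [w] using ((hasDerivAt_id t).const_mul (-(C + 1))).exp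
  have hderiv := deriv_nonneg_of_isLocalMaxOn_Iic htime (hw'.hasDerivWithinAt.mul hg)
  have hgrowth : 0 ≤ D - (C + 1) * u t x := by
    rw [hgt] at hderiv
    exact nonneg_of_mul_nonneg_right (by linarith) (hw t)
  linarith

theorem nonpos_of_hasLeftLowerSupport_Ioo (hM : IsCompact M)
    (hu : ContinuousOn (fun p : ℝ × X => u p.1 p.2) (Icc 0 T ×ˢ M)) (h0 : ∀ x ∈ M, u 0 x ≤ 0)
    (hsupp : ∀ t ∈ Ioo 0 T, ∀ x ∈ M, IsMaxOn (u t) M x → 0 < u t x →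
      ∃ D ≤ C * u t x, HasLeftLowerSupport (fun s => u s x) D t) :
    ∀ t ∈ Icc 0 T, ∀ x ∈ M, u t x ≤ 0 := by
  intro t ht x hx
  rcases ht.1.eq_or_lt with rfl | ht0
  · exact h0 x hx
  have hclosure : closure (Ico 0 T) = Icc 0 T := closure_Ico (ht0.trans_le ht.2).ne
  have hIco : MapsTo (fun s => u s x) (Ico 0 T) (Iic 0) := fun s hs =>
    nonpos_of_hasLeftLowerSupport_Ioc hM
      (hu.mono (prod_mono_left (Icc_subset_Icc_right hs.2.le))) h0
      (fun r hr => hsupp r ⟨hr.1, hr.2.trans_lt hs.2⟩) s (right_mem_Icc.2 hs.1) x hx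
  have hcont : ContinuousOn (fun s => u s x) (closure (Ico 0 T)) :=
    hclosure ▸ hu.comp (f := fun s => (s, x)) (by fun_prop) fun s hs => ⟨hs, hx⟩
  simpa using hIco.closure_of_continuousOn hcont (hclosure ▸ ht)

end HamiltonPrinciple

/-- The second-order part is `D²f` contracted with `∑ⱼ Xⱼ ⊗ Xⱼ`, so variable and degenerate
coefficients are allowed; the Laplacian is the case where `X` is an orthonormal basis. -/
theorem stmt_6_general {E F ι : Type*} [NormedAddCommGroup E] [InnerProductSpace ℝ E]
    [NormedAddCommGroup F] [InnerProductSpace ℝ F] [Fintype ι]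
    {M : Set E} (hM : IsCompact M) {T : ℝ}
    {W : Set F} (hWne : W.Nonempty) (hWc : IsComplete W) (hWconv : Convex ℝ W)
    {φ : ℝ → E → F → F}
    (hφ : ∀ U : Set F, Bornology.IsBounded U →
      ∃ C : ℝ≥0, ∀ t ∈ Ioo 0 T, ∀ x ∈ M, LipschitzOnWith C (φ t x) U)
    {X : ι → ℝ → E → E} {b : ℝ → E → E}
    {f f' : ℝ → E → F} {Df : ℝ → E → E →L[ℝ] F} {D2f : ℝ → E → E →L[ℝ] E →L[ℝ] F}
    (hf : ContinuousOn (fun p : ℝ × E => f p.1 p.2) (Icc 0 T ×ˢ M))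
    (hft : ∀ t ∈ Ioo 0 T, ∀ x ∈ M, HasDerivAt (fun s => f s x) (f' t x) t)
    (hDf : ∀ t ∈ Ioo 0 T, ∀ x ∈ M, HasFDerivWithinAt (f t) (Df t x) M x)
    (hD2f : ∀ t ∈ Ioo 0 T, ∀ x ∈ M, HasFDerivWithinAt (Df t) (D2f t x) M x)
    (hPDE : ∀ t ∈ Ioo 0 T, ∀ x ∈ M,
      f' t x = (∑ j, D2f t x (X j t x) (X j t x)) + Df t x (b t x) + φ t x (f t x))
    {ν : E → E} (hν : ∀ x ∈ frontier M, IsOutwardNormal M x (ν x))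
    (hinit : ∀ x ∈ M, f 0 x ∈ W)
    (hreact : ∀ t ∈ Ioo 0 T, ∀ x ∈ M, ∀ ω ∈ frontier W, ∀ l : F, ‖l‖ = 1 →
      IsMaxOn (fun σ => ⟪l, σ⟫) W ω → ⟪l, φ t x ω⟫ ≤ 0)
    (hbd : ∀ t ∈ Ioo 0 T, ∀ x ∈ frontier M, Df t x (ν x) = 0) :
    ∀ t ∈ Icc 0 T, ∀ x ∈ M, f t x ∈ W := by
  have ⟨w₀, hw₀⟩ := hWne
  obtain ⟨r, hr⟩ : ∃ r, (fun p : ℝ × E => f p.1 p.2) '' (Icc 0 T ×ˢ M) ⊆ closedBall w₀ r :=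
    ((isCompact_Icc.prod hM).image_of_continuousOn hf).isBounded.subset_closedBall w₀
  obtain ⟨C, hC⟩ := hφ (closedBall w₀ (2 * r)) isBounded_closedBall
  suffices hdist : ∀ t ∈ Icc 0 T, ∀ x ∈ M, infDist (f t x) W ≤ 0 from fun t ht x hx =>
    (hWc.isClosed.mem_iff_infDist_zero hWne).2 ((hdist t ht x hx).antisymm infDist_nonneg)
  refine nonpos_of_hasLeftLowerSupport_Ioo (C := C) hM
    ((continuous_infDist_pt W).comp_continuousOn hf)
    (fun x hx => (infDist_zero_of_mem (hinit x hx)).le) fun t ht x hx hmax hpos => ?_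
  obtain ⟨ω, hω, l, hl, hsupp, hωdist, htouch⟩ :=
    exists_frontier_isMaxOn_inner_of_infDist_pos hWne hWc hWconv hpos
  have hbelow (s : ℝ) (y : E) : ⟪l, f s y - ω⟫ ≤ infDist (f s y) W :=
    inner_sub_le_infDist hWne hl hsupp _
  have hspace : IsMaxOn (fun y => ⟪l, f t y⟫) M x := isMaxOn_iff.2 fun y hy => by
    have hle := (hbelow t y).trans ((hmax hy).trans_eq htouch.symm)
    simpa only [inner_sub_right, sub_le_sub_iff_right] using hle
  have helliptic : ⟪l, (∑ j, D2f t x (X j t x) (X j t x)) + Df t x (b t x)⟫ ≤ 0 :=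
    inner_elliptic_nonpos_of_neumann hx hspace.localize (hDf t ht) (hD2f t ht x hx) (hν x)
      (hbd t ht x) _ _
  have hreaction : ⟪l, φ t x (f t x)⟫ ≤ C * infDist (f t x) W := by
    have hfr : dist (f t x) w₀ ≤ r := hr ⟨(t, x), ⟨Ioo_subset_Icc_self ht, hx⟩, rfl⟩
    have hωr := dist_le_two_mul_dist_of_dist_eq_infDist hw₀ hωdist
    rw [← hωdist, dist_eq_norm]
    exact inner_le_mul_norm_sub_of_lipschitzOnWith (hC t ht x hx)
      (mem_closedBall.2 (by linarith [dist_nonneg.trans hfr])) (mem_closedBall.2 (by linarith)) hl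
      (hreact t ht x hx ω hω l hl hsupp)
  refine ⟨⟪l, f' t x⟫, ?_, fun s => ⟪l, f s x - ω⟫, ?_, htouch, .of_forall fun s => hbelow s x⟩
  · rw [hPDE t ht x hx, inner_add_right]
    linarith
  · exact ((innerSL ℝ l).hasFDerivAt.comp_hasDerivAt t
      ((hft t ht x hx).sub_const ω)).hasDerivWithinAt

/-- Maximum principle under Neumann boundary conditions for parabolic systems. -/
theorem stmt_6
    (n m : ℕ)
    -- M is the closure of a bounded domain (bounded connected open set) in ℝⁿ
    (Ω : Set (EuclideanSpace ℝ (Fin n)))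
    (hΩopen : IsOpen Ω) (hΩconn : IsConnected Ω) (hΩbdd : Bornology.IsBounded Ω)
    (M : Set (EuclideanSpace ℝ (Fin n))) (hM : M = closure Ω)
    (T : ℝ) (hT : 0 < T)
    -- W is a nonempty closed convex subset of ℝᵐ
    (W : Set (EuclideanSpace ℝ (Fin m)))
    (hWne : W.Nonempty) (hWcl : IsClosed W) (hWconv : Convex ℝ W)
    -- φ is Lipschitz in v, uniformly in (t,x), on every compact set U ⊆ ℝᵐ
    (φ : ℝ → EuclideanSpace ℝ (Fin n) → EuclideanSpace ℝ (Fin m) →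
      EuclideanSpace ℝ (Fin m))
    (hφ : ∀ U : Set (EuclideanSpace ℝ (Fin m)), IsCompact U → ∃ C > (0 : ℝ),
      ∀ t ∈ Set.Ioo (0 : ℝ) T, ∀ x ∈ M, ∀ v₁ ∈ U, ∀ v₂ ∈ U,
        ‖φ t x v₁ - φ t x v₂‖ ≤ C * ‖v₁ - v₂‖)
    -- drift coefficients
    (ζ : Fin n → ℝ → EuclideanSpace ℝ (Fin n) → ℝ)
    -- the solution f, its time derivative f', its first and second spatial
    -- derivatives (taken within M)
    (f f' : ℝ → EuclideanSpace ℝ (Fin n) → EuclideanSpace ℝ (Fin m))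
    (Df : ℝ → EuclideanSpace ℝ (Fin n) →
      (EuclideanSpace ℝ (Fin n) →L[ℝ] EuclideanSpace ℝ (Fin m)))
    (D2f : ℝ → EuclideanSpace ℝ (Fin n) →
      (EuclideanSpace ℝ (Fin n) →L[ℝ]
        (EuclideanSpace ℝ (Fin n) →L[ℝ] EuclideanSpace ℝ (Fin m))))
    (hfcont : ContinuousOn (fun p : ℝ × EuclideanSpace ℝ (Fin n) => f p.1 p.2)
      (Set.Icc 0 T ×ˢ M))
    (hft : ∀ t ∈ Set.Ioo (0 : ℝ) T, ∀ x ∈ M,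
      HasDerivAt (fun s => f s x) (f' t x) t)
    (hftcont : ∀ x ∈ M, ContinuousOn (fun t => f' t x) (Set.Ioo (0 : ℝ) T))
    (hDf : ∀ t ∈ Set.Ioo (0 : ℝ) T, ∀ x ∈ M,
      HasFDerivWithinAt (f t) (Df t x) M x)
    (hD2f : ∀ t ∈ Set.Ioo (0 : ℝ) T, ∀ x ∈ M,
      HasFDerivWithinAt (Df t) (D2f t x) M x)
    -- the parabolic system
    (hPDE : ∀ t ∈ Set.Ioo (0 : ℝ) T, ∀ x ∈ M,
      f' t x =
        (∑ j : Fin n, D2f t x (EuclideanSpace.single j 1) (EuclideanSpace.single j 1))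
        + (∑ j : Fin n, ζ j t x • Df t x (EuclideanSpace.single j 1))
        + φ t x (f t x))
    -- the outward unit normal on the boundary of M
    (ν : EuclideanSpace ℝ (Fin n) → EuclideanSpace ℝ (Fin n))
    (hν1 : ∀ x ∈ frontier M, ‖ν x‖ = 1)
    (hν2 : ∀ x ∈ frontier M, ∀ e : EuclideanSpace ℝ (Fin n), ⟪e, ν x⟫ < 0 →
      ∃ ε > (0 : ℝ), ∀ u ∈ Set.Icc (0 : ℝ) ε, x + u • e ∈ M)
    -- Requirement 1: the initial value lies in W
    (hreq1 : ∀ x ∈ M, f 0 x ∈ W)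
    -- Requirement 2: φ points into W on the boundary of W
    (hreq2 : ∀ t ∈ Set.Ioo (0 : ℝ) T, ∀ x ∈ M, ∀ ω ∈ frontier W,
      ∀ lam, IsSupportingVector W ω lam → ⟪lam, φ t x ω⟫ ≤ 0)
    -- Neumann boundary condition: D_x f(t,x)[ν(x)] = 0 on (0,T) × ∂M
    (hbd : ∀ t ∈ Set.Ioo (0 : ℝ) T, ∀ x ∈ frontier M, Df t x (ν x) = 0) :
    -- conclusion: f lies in W everywhere on [0,T] × M
    ∀ t ∈ Set.Icc (0 : ℝ) T, ∀ x ∈ M, f t x ∈ W := by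
  have hLip (U : Set (EuclideanSpace ℝ (Fin m))) (hU : Bornology.IsBounded U) :
      ∃ C : ℝ≥0, ∀ t ∈ Ioo 0 T, ∀ x ∈ M, LipschitzOnWith C (φ t x) U := by
    obtain ⟨C, hCpos, hC⟩ := hφ (closure U) hU.isCompact_closure
    refine ⟨⟨C, hCpos.le⟩, fun t ht x hx => .of_dist_le_mul fun v hv w hw => ?_⟩
    rw [dist_eq_norm, dist_eq_norm]
    exact hC t ht x hx v (subset_closure hv) w (subset_closure hw)
  exact stmt_6_general (hM ▸ hΩbdd.isCompact_closure) hWne hWcl.isComplete hWconv hLip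
    (X := fun j _ _ => EuclideanSpace.single j 1)
    (b := fun t x => ∑ j, ζ j t x • EuclideanSpace.single j 1) hfcont hft hDf hD2f
    (fun t ht x hx => by simpa using hPDE t ht x hx)
    (fun x hx => isOutwardNormal_of_norm_eq_one (hν1 x hx) (hν2 x hx)) hreq1
    (fun t ht x hx ω hω l hl hsupp => hreq2 t ht x hx ω hω l ⟨hl, hsupp⟩) hbd
end

section
/- Let W be a nonempty closed convex subset of ℝᵐ and let v ∈ ℝᵐ satisfy dist_W v > 0, where dist_W v is the Euclidean distance from v to W. Then dist_W v = sup_{ω ∈ ∂W} sup_{λ ∈ S_ω W} ⟨λ, v − ω⟩. -/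
open scoped RealInnerProductSpace

/-! If `lam` supports `W` at `ω`, then `⟪lam, v - ω⟫ ≤ ⟪lam, v - σ⟫ ≤ ‖v - σ‖` for every `σ ∈ W`, so
no value exceeds the distance. The distance is attained at the point `ω` of `W` nearest to `v`: by
convexity the direction of `v - ω` supports `W` at `ω`, and `ω` is a frontier point because it is a
limit of points of the open ball about `v` that misses `W`. -/

theorem mem_frontier_of_infDist_eq_dist {E : Type*} [NormedAddCommGroup E] [NormedSpace ℝ E]
    {W : Set E} {v ω : E} (hω : ω ∈ W) (hv : v ∉ W) (hdist : Metric.infDist v W = dist v ω) :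
    ω ∈ frontier W := by
  have hne : dist v ω ≠ 0 := dist_ne_zero.2 fun h => hv (h ▸ hω)
  have hball : Metric.ball v (dist v ω) ⊆ Wᶜ :=
    (hdist ▸ Metric.disjoint_ball_infDist).subset_compl_right
  have hclosure : ω ∈ closure (Metric.ball v (dist v ω)) := by
    rw [closure_ball v hne, Metric.mem_closedBall, dist_comm]
  rw [frontier_eq_closure_inter_closure]
  exact ⟨subset_closure hω, closure_mono hball hclosure⟩

section

variable {E : Type*} [NormedAddCommGroup E] [InnerProductSpace ℝ E] {W : Set E} {v ω lam : E}

/-- The set `S_ω W` of supporting vectors for `W` at `ω`, in an arbitrary real inner product space.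
Membership in it unfolds to `IsSupportingVector` in Euclidean space; as there, `ω` is not required
to lie on the frontier of `W`. -/
def supportingVectors (W : Set E) (ω : E) : Set E :=
  {lam | ‖lam‖ = 1 ∧ ∀ σ ∈ W, ⟪lam, σ⟫ ≤ ⟪lam, ω⟫}

theorem inner_sub_le_infDist_of_mem_supportingVectors (hW : W.Nonempty)
    (hlam : lam ∈ supportingVectors W ω) : ⟪lam, v - ω⟫ ≤ Metric.infDist v W := by
  refine (Metric.le_infDist hW).2 fun {σ} hσ => ?_
  calc
    ⟪lam, v - ω⟫ ≤ ⟪lam, v - σ⟫ := by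
      simpa only [inner_sub_right] using sub_le_sub_left (hlam.2 σ hσ) ⟪lam, v⟫
    _ ≤ ‖lam‖ * ‖v - σ‖ := real_inner_le_norm lam (v - σ)
    _ = dist v σ := by rw [hlam.1, one_mul, dist_eq_norm]

theorem inner_sub_sub_nonpos_of_infDist_eq_dist (hW : Convex ℝ W) (hω : ω ∈ W)
    (hdist : Metric.infDist v W = dist v ω) : ∀ σ ∈ W, ⟪v - ω, σ - ω⟫ ≤ 0 := by
  refine (norm_eq_iInf_iff_real_inner_le_zero hW hω).1 ?_
  simpa only [Metric.infDist_eq_iInf, dist_eq_norm] using hdist.symm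

theorem normalize_sub_mem_supportingVectors (hvω : v ≠ ω)
    (hinner : ∀ σ ∈ W, ⟪v - ω, σ - ω⟫ ≤ 0) :
    NormedSpace.normalize (v - ω) ∈ supportingVectors W ω := by
  refine ⟨NormedSpace.norm_normalize (sub_ne_zero.2 hvω), fun σ hσ => ?_⟩
  have hle : ⟪v - ω, σ⟫ ≤ ⟪v - ω, ω⟫ := by
    simpa only [inner_sub_right, sub_nonpos] using hinner σ hσ
  simpa only [NormedSpace.normalize, real_inner_smul_left] using
    mul_le_mul_of_nonneg_left hle (inv_nonneg.2 (norm_nonneg (v - ω)))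

theorem inner_normalize_self (x : E) : ⟪NormedSpace.normalize x, x⟫ = ‖x‖ := by
  rw [NormedSpace.normalize, real_inner_smul_left, real_inner_self_eq_norm_mul_norm,
    ← mul_assoc, inv_mul_mul_self]

theorem exists_infDist_eq_dist_of_isComplete_convex (hne : W.Nonempty) (hcomplete : IsComplete W)
    (hconvex : Convex ℝ W) (v : E) : ∃ ω ∈ W, Metric.infDist v W = dist v ω := by
  obtain ⟨ω, hω, hmin⟩ := exists_norm_eq_iInf_of_complete_convex hne hcomplete hconvex v
  refine ⟨ω, hω, ?_⟩
  simpa only [Metric.infDist_eq_iInf, dist_eq_norm] using hmin.symm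

theorem stmt_8_general (hne : W.Nonempty) (hcomplete : IsComplete W) (hconvex : Convex ℝ W)
    (hv : v ∉ W) :
    IsGreatest {r : ℝ | ∃ ω ∈ frontier W, ∃ lam ∈ supportingVectors W ω, r = ⟪lam, v - ω⟫}
      (Metric.infDist v W) := by
  constructor
  · obtain ⟨ω, hω, hdist⟩ :=
      exists_infDist_eq_dist_of_isComplete_convex hne hcomplete hconvex v
    have hvω : v ≠ ω := fun h => hv (h ▸ hω)
    refine ⟨ω, mem_frontier_of_infDist_eq_dist hω hv hdist, NormedSpace.normalize (v - ω),
      normalize_sub_mem_supportingVectors hvω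
        (inner_sub_sub_nonpos_of_infDist_eq_dist hconvex hω hdist), ?_⟩
    rw [inner_normalize_self, hdist, dist_eq_norm]
  · rintro _ ⟨ω, -, lam, hlam, rfl⟩
    exact inner_sub_le_infDist_of_mem_supportingVectors hne hlam

end

theorem stmt_8 (m : ℕ) (W : Set (EuclideanSpace ℝ (Fin m)))
    (hWne : W.Nonempty) (hWcl : IsClosed W) (hWconv : Convex ℝ W)
    (v : EuclideanSpace ℝ (Fin m)) (hv : 0 < Metric.infDist v W) :
    Metric.infDist v W =
      sSup {r : ℝ | ∃ ω ∈ frontier W, ∃ lam,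
        IsSupportingVector W ω lam ∧ r = ⟪lam, v - ω⟫} :=
  (stmt_8_general hWne hWcl.isComplete hWconv
    ((hWcl.notMem_iff_infDist_pos hWne).2 hv)).csSup_eq.symm
end
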